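/- Let σ0 > 0 and G' = γ_{0,√3·σ0}. Let M ≥ 1 and, for each i ∈ {1,…,M}, let a_i < b_i be finite reals; for p ≥ 2 let ω_{i,p} be the p-optimal level of [a_i, b_i) with respect to φ0 = γ_{0,σ0}, let ω_{i,∞} := (a_i + b_i)/2, and set w_i(p) := G'(ω_{i,p})^{(p−2)/p}. Then for every v ∈ ℝ^M, lim_{p→∞} ( ∑_{i=1}^M w_i(p)^p·|v_i − ω_{i,p}|^p )^{1/p} = max_{1≤i≤M} G'(ω_{i,∞})·|v_i − ω_{i,∞}|. (This is the key limit identity showing that the D_pC weighted-ℓp fidelity constraint tends, as p → ∞, to the quantization-consistency constraint.) -/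

import Mathlib

/-!
Two facts carry the limit. First, the `p`-optimal level of `[a, b)` tends to the midpoint `c`
(`tendsto_optimal_level`): with `h = (b - a) / 2`, a level at distance at least `2δ` from `c` is at
distance at least `h + δ` from a subinterval of length `δ`, so its cost is at least a constant times
`(h + δ) ^ p`, whereas the cost of `c` is at most a constant times `h ^ p`.

Second, if finitely many nonnegative functions `y i p` converge to `L i`, then their `ℓ^p` norms,
with the exponent `p` itself going to infinity, converge to `max L` (`tendsto_lp_norm`), since
`max y ≤ ‖y‖_p ≤ M ^ (1 / p) * max y`. This is applied to
`y i p = G' (ω i p) ^ ((p - 2) / p) * |v i - ω i p|`.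
-/

open Finset MeasureTheory Filter

/-- Centered Gaussian pdf of standard deviation σ. -/
noncomputable def gaussPdf (σ t : ℝ) : ℝ :=
  (2 * Real.pi * σ ^ 2) ^ (-(1:ℝ) / 2) * Real.exp (-(t ^ 2) / (2 * σ ^ 2))

/-- The `ℓ^p` norm of a vector that itself varies with `p` and converges as `p → ∞` tends to the
maximum of the limit vector. -/
lemma tendsto_lp_norm {M : ℕ} (hM : 1 ≤ M) (y : Fin M → ℝ → ℝ) (L : Fin M → ℝ)
    (hy : ∀ i, ∀ p, 0 ≤ y i p) (hL : ∀ i, Tendsto (y i) atTop (nhds (L i))) :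
    Tendsto (fun p : ℝ => (∑ i, y i p ^ p) ^ (1 / p)) atTop (nhds (⨆ i, L i)) := by
  have : Nonempty (Fin M) := ⟨⟨0, hM⟩⟩
  have hsup : Tendsto (fun p => univ.sup' univ_nonempty (fun i => y i p)) atTop
      (nhds (⨆ i, L i)) := by
    rw [← Finset.sup'_univ_eq_ciSup]
    exact Tendsto.finset_sup'_nhds_apply univ_nonempty (fun i _ => hL i)
  have hc : Tendsto (fun p : ℝ => (M : ℝ) ^ (1 / p)) atTop (nhds 1) := by
    have h0 : Tendsto (fun p : ℝ => 1 / p) atTop (nhds 0) := by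
      simpa using tendsto_inv_atTop_zero (𝕜 := ℝ)
    have := (tendsto_const_nhds (x := (M : ℝ))).rpow h0 (Or.inl (by positivity))
    simpa using this
  have hup := hc.mul hsup
  rw [one_mul] at hup
  refine tendsto_of_tendsto_of_tendsto_of_le_of_le' hsup hup ?_ ?_
  · filter_upwards [eventually_gt_atTop 0] with p hp
    refine Finset.sup'_le _ _ fun i _ => ?_
    have h1 : y i p ^ p ≤ ∑ j, y j p ^ p :=
      Finset.single_le_sum (f := fun j => y j p ^ p)
        (fun j _ => Real.rpow_nonneg (hy j p) p) (mem_univ i)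
    calc y i p = (y i p ^ p) ^ (1 / p) := by
          rw [← Real.rpow_mul (hy i p), mul_one_div_cancel hp.ne', Real.rpow_one]
      _ ≤ _ := Real.rpow_le_rpow (Real.rpow_nonneg (hy i p) p) h1 (by positivity)
  · filter_upwards [eventually_gt_atTop 0] with p hp
    set S := univ.sup' univ_nonempty (fun i => y i p)
    have hS : ∀ i, y i p ≤ S := fun i => Finset.le_sup' (fun i => y i p) (mem_univ i)
    have hS0 : 0 ≤ S := (hy ⟨0, hM⟩ p).trans (hS _)
    have h1 : ∑ j, y j p ^ p ≤ M * S ^ p := by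
      have := Finset.sum_le_sum (s := univ) fun j (_ : j ∈ univ) =>
        Real.rpow_le_rpow (hy j p) (hS j) hp.le
      simpa using this
    calc (∑ j, y j p ^ p) ^ (1 / p) ≤ (M * S ^ p) ^ (1 / p) :=
          Real.rpow_le_rpow (Finset.sum_nonneg fun j _ => Real.rpow_nonneg (hy j p) p) h1
            (by positivity)
      _ = M ^ (1 / p) * S := by
          rw [Real.mul_rpow (by positivity) (by positivity), ← Real.rpow_mul hS0,
            mul_one_div_cancel hp.ne', Real.rpow_one]

lemma integrableOn_cost {f : ℝ → ℝ} (hf : Continuous f) (a b x p : ℝ) (hp : 0 ≤ p) :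
    IntegrableOn (fun t => |t - x| ^ p * f t) (Set.Ico a b) := by
  have : Continuous fun t => |t - x| ^ p * f t :=
    ((continuous_id.sub continuous_const).abs.rpow_const fun _ => Or.inr hp).mul hf
  exact (this.continuousOn.integrableOn_Icc).mono_set Set.Ico_subset_Icc_self

/-- The cost of the level `x` is bounded below by the contribution of a subinterval `[c, d)` all
of whose points are at distance at least `A` from `x`. -/
lemma cost_lower_bound {f : ℝ → ℝ} (hf : Continuous f) (hpos : ∀ t, 0 ≤ f t)
    {a b c d x p m A : ℝ} (hp : 0 ≤ p) (hac : a ≤ c) (hcd : c ≤ d) (hdb : d ≤ b)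
    (hm : ∀ t ∈ Set.Ico a b, m ≤ f t) (hm0 : 0 ≤ m) (hA : 0 ≤ A)
    (hdist : ∀ t ∈ Set.Ico c d, A ≤ |t - x|) :
    (d - c) * (A ^ p * m) ≤ ∫ t in Set.Ico a b, |t - x| ^ p * f t := by
  have hsub : Set.Ico c d ⊆ Set.Ico a b := Set.Ico_subset_Ico hac hdb
  have hint := integrableOn_cost hf a b x p hp
  calc (d - c) * (A ^ p * m) = ∫ _t in Set.Ico c d, A ^ p * m := by
        simp [hcd]
    _ ≤ ∫ t in Set.Ico c d, |t - x| ^ p * f t := by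
        refine setIntegral_mono_on (integrableOn_const (by simp)) (hint.mono_set hsub) measurableSet_Ico
          fun t ht => ?_
        exact mul_le_mul (Real.rpow_le_rpow hA (hdist t ht) hp) (hm t (hsub ht)) hm0
          (by positivity)
    _ ≤ _ := by
        refine setIntegral_mono_set hint ?_ hsub.eventuallyLE
        exact Eventually.of_forall fun t => mul_nonneg (by positivity) (hpos t)

/-- For a continuous positive density, minimizers of the `p`-th power cost on a bounded interval
tend to the midpoint as `p → ∞`. -/
lemma tendsto_optimal_level {f : ℝ → ℝ} (hf : Continuous f) (hpos : ∀ t, 0 < f t)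
    {a b : ℝ} (hab : a < b) (w : ℝ → ℝ)
    (hw : ∀ p : ℝ, 2 ≤ p → ∀ lam : ℝ,
      ∫ t in Set.Ico a b, |t - w p| ^ p * f t ≤ ∫ t in Set.Ico a b, |t - lam| ^ p * f t) :
    Tendsto w atTop (nhds ((a + b) / 2)) := by
  obtain ⟨t0, -, ht0⟩ := isCompact_Icc.exists_isMinOn (Set.nonempty_Icc.2 hab.le) hf.continuousOn
  obtain ⟨t1, -, ht1⟩ := isCompact_Icc.exists_isMaxOn (Set.nonempty_Icc.2 hab.le) hf.continuousOn
  have hm : ∀ t ∈ Set.Ico a b, f t0 ≤ f t := fun t ht => ht0 (Set.Ico_subset_Icc_self ht)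
  have hMx : ∀ t ∈ Set.Ico a b, f t ≤ f t1 := fun t ht => ht1 (Set.Ico_subset_Icc_self ht)
  have hm0 := hpos t0
  rw [Metric.tendsto_nhds]
  intro ε hε
  set h := (b - a) / 2 with hh
  have hh0 : 0 < h := by rw [hh]; linarith
  set δ := min (ε / 2) h with hδ
  have hδ0 : 0 < δ := lt_min (by positivity) hh0
  have hδε : δ ≤ ε / 2 := min_le_left _ _
  have hδh : δ ≤ h := min_le_right _ _
  have hlim : Tendsto (fun p : ℝ => ((h + δ) / h) ^ p) atTop atTop :=
    tendsto_rpow_atTop_of_base_gt_one _ (by rw [lt_div_iff₀ hh0]; linarith)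
  filter_upwards [eventually_ge_atTop 2, hlim.eventually_gt_atTop ((b - a) * f t1 / (δ * f t0))]
    with p hp2 hp
  have hp0 : 0 ≤ p := by linarith
  have hupper : ∫ t in Set.Ico a b, |t - (a + b) / 2| ^ p * f t ≤ (b - a) * (h ^ p * f t1) := by
    calc _ ≤ ∫ _t in Set.Ico a b, h ^ p * f t1 := by
          refine setIntegral_mono_on (integrableOn_cost hf a b _ p hp0)
            (integrableOn_const (by simp))
            measurableSet_Ico fun t ht => ?_
          refine mul_le_mul (Real.rpow_le_rpow (abs_nonneg _) ?_ hp0) (hMx t ht)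
            (hpos t).le (by positivity)
          rw [abs_le]
          constructor <;> linarith [ht.1, ht.2]
      _ = _ := by simp [hab.le]
  have hkey : (b - a) * (h ^ p * f t1) < δ * ((h + δ) ^ p * f t0) := by
    rw [Real.div_rpow (by positivity) hh0.le, div_lt_div_iff₀ (by positivity) (by positivity)] at hp
    linarith
  rw [Real.dist_eq]
  by_contra! hcon
  -- Whichever side of the midpoint the level is on, use the `δ`-subinterval at the opposite end.
  have hlower : δ * ((h + δ) ^ p * f t0) ≤ ∫ t in Set.Ico a b, |t - w p| ^ p * f t := by
    rcases le_abs'.1 hcon with hc | hc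
    · have := cost_lower_bound hf (fun t => (hpos t).le) (a := a) (b := b) (c := b - δ) (d := b)
        (x := w p) (A := h + δ) hp0 (by linarith) (by linarith) le_rfl hm hm0.le (by positivity)
        (fun t ht => le_abs.2 (Or.inl (by linarith [ht.1])))
      simpa using this
    · have := cost_lower_bound hf (fun t => (hpos t).le) (a := a) (b := b) (c := a) (d := a + δ)
        (x := w p) (A := h + δ) hp0 le_rfl (by linarith) (by linarith) hm hm0.le (by positivity)
        (fun t ht => le_abs.2 (Or.inr (by linarith [ht.2])))
      simpa using this
  linarith [hw p hp2 ((a + b) / 2)]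

lemma gaussPdf_pos {σ : ℝ} (hσ : 0 < σ) (t : ℝ) : 0 < gaussPdf σ t := by
  unfold gaussPdf
  positivity

lemma continuous_gaussPdf (σ : ℝ) : Continuous (gaussPdf σ) := by
  unfold gaussPdf
  fun_prop

theorem dpc_constraint_tendsto_quantization_consistency
    (σ0 : ℝ) (hσ0 : 0 < σ0) (M : ℕ) (hM : 1 ≤ M)
    (a b : Fin M → ℝ) (hab : ∀ i, a i < b i)
    (ω : Fin M → ℝ → ℝ)
    (hω : ∀ i, ∀ p : ℝ, 2 ≤ p → ∀ lam : ℝ,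
      ∫ t in Set.Ico (a i) (b i), |t - ω i p| ^ p * gaussPdf σ0 t ≤
        ∫ t in Set.Ico (a i) (b i), |t - lam| ^ p * gaussPdf σ0 t)
    (v : Fin M → ℝ) :
    Tendsto
      (fun p : ℝ =>
        (∑ i, (gaussPdf (Real.sqrt 3 * σ0) (ω i p) ^ ((p - 2) / p)) ^ p *
            |v i - ω i p| ^ p) ^ (1 / p))
      atTop
      (nhds (⨆ i, gaussPdf (Real.sqrt 3 * σ0) ((a i + b i) / 2) *
        |v i - (a i + b i) / 2|)) := by
  have hlev : ∀ i, Tendsto (ω i) atTop (nhds ((a i + b i) / 2)) := fun i =>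
    tendsto_optimal_level (continuous_gaussPdf σ0) (gaussPdf_pos hσ0) (hab i) (ω i) (hω i)
  have hG : ∀ t, 0 < gaussPdf (Real.sqrt 3 * σ0) t := gaussPdf_pos (by positivity)
  have hexp : Tendsto (fun p : ℝ => (p - 2) / p) atTop (nhds 1) := by
    have h0 : Tendsto (fun p : ℝ => 1 - 2 * p⁻¹) atTop (nhds 1) := by
      simpa using (tendsto_inv_atTop_zero (𝕜 := ℝ)).const_mul 2 |>.const_sub 1
    refine h0.congr' ?_
    filter_upwards [eventually_gt_atTop 0] with p hp
    field_simp
  have hmain := tendsto_lp_norm hM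
    (fun i p => gaussPdf (Real.sqrt 3 * σ0) (ω i p) ^ ((p - 2) / p) * |v i - ω i p|)
    (fun i => gaussPdf (Real.sqrt 3 * σ0) ((a i + b i) / 2) * |v i - (a i + b i) / 2|)
    (fun i p => mul_nonneg (Real.rpow_nonneg (hG _).le _) (abs_nonneg _))
    (fun i => by
      have h1 := (((continuous_gaussPdf (Real.sqrt 3 * σ0)).tendsto _).comp (hlev i)).rpow hexp
        (Or.inl (hG _).ne')
      rw [Real.rpow_one] at h1
      exact h1.mul ((hlev i).const_sub (v i)).abs)
  refine hmain.congr fun p => ?_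
  congr 1
  refine Finset.sum_congr rfl fun i _ => ?_
  exact Real.mul_rpow (Real.rpow_nonneg (hG _).le _) (abs_nonneg _)
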